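/- arXiv:1505.00213 — 2 statements merged into one kernel-verified Lean document; each statement's English description precedes it below -/
import Mathlib

section
/- Fix k ≥ 1 and ℓ ≥ 0, and let B = ∏_{i=1}^{k} [a_i, b_i] ⊂ ℝ^k be a nondegenerate closed axis-parallel box (a_i < b_i for all i). Let E(B, ℓ) be the space of ℓ-tuples of nondegenerate closed axis-parallel sub-boxes of B that are pairwise disjoint, topologized as a subspace of ((ℝ^k)²)^ℓ via corner coordinates. Then E(B, ℓ) is (k−2)-connected: it is nonempty; if k ≥ 2 it is path-connected; and for every basepoint e and every 1 ≤ m ≤ k−2, the homotopy group π_m(E(B, ℓ), e) is trivial. -/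
/-- The space `E(B, ℓ)` of `ℓ`-tuples of pairwise disjoint nondegenerate closed
axis-parallel sub-boxes of the box `B = Icc a b ⊆ ℝ^k`, parametrized by corner
coordinates, as a subspace of `((ℝ^k)²)^ℓ`. -/
def BoxTuples (k ℓ : ℕ) (a b : Fin k → ℝ) :
    Set (Fin ℓ → (Fin k → ℝ) × (Fin k → ℝ)) :=
  {t | (∀ j, ∀ i, (t j).1 i < (t j).2 i) ∧
       (∀ j, Set.Icc (t j).1 (t j).2 ⊆ Set.Icc a b) ∧
       ∀ j j', j ≠ j' →
         Disjoint (Set.Icc (t j).1 (t j).2) (Set.Icc (t j').1 (t j').2)}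

/-!
A tuple of boxes in a compact family can be shrunk to cubes of a common small radius around the
centers, so it suffices to contract spheres in the space of configurations of distinct points in
the open box. Let `f` be a map from the `m`-sphere into that space, with `m + 1 < k`. After a small
perturbation `f` is smooth, and then the differences `f x j - f x j'` span a family of lines whose
union has Hausdorff dimension at most `m + 1`. Hence some direction `v` lies on none of these lines.
Moving every configuration `f x` along straight segments to one fixed configuration of points on a
line in direction `v` never makes two points collide, which contracts `f`.
-/

open Set Metric Topology Function
open Module (finrank)
open scoped unitInterval

section Homotopy

variable {X : Type*} [TopologicalSpace X]

theorem homotopic_of_segment_subset {E : Type*} [AddCommGroup E] [TopologicalSpace E]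
    [IsTopologicalAddGroup E] [Module ℝ E] [ContinuousSMul ℝ E] {s : Set E} (f g : C(X, s))
    (h : ∀ x, segment ℝ (f x : E) (g x) ⊆ s) : f.Homotopic g :=
  let val : C(s, E) := ⟨_, continuous_subtype_val⟩
  let H := ContinuousMap.Homotopy.affine (val.comp f) (val.comp g)
  ⟨{ toFun := fun p => ⟨H p, h p.2 <| by
        rw [segment_eq_image_lineMap]
        exact mem_image_of_mem _ p.1.2⟩
     continuous_toFun := H.continuous.subtype_mk _
     map_zero_left := fun x => Subtype.ext (H.apply_zero x)
     map_one_left := fun x => Subtype.ext (H.apply_one x) }⟩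

theorem exists_forall_ball_subset [CompactSpace X] {E : Type*} [PseudoMetricSpace E] {U : Set E}
    (hU : IsOpen U) (f : C(X, U)) : ∃ δ > 0, ∀ x, ball (f x : E) δ ⊆ U := by
  have hcompact : IsCompact (range fun x => (f x : E)) := isCompact_range (by fun_prop)
  obtain ⟨δ, hδ, hsub⟩ := hcompact.exists_thickening_subset_open hU
    (range_subset_iff.2 fun x => (f x).2)
  exact ⟨δ, hδ, fun x => (ball_subset_thickening (mem_range_self x) δ).trans hsub⟩

theorem exists_contDiff_segment_subset {V W : Type*} [NormedAddCommGroup V] [NormedSpace ℝ V]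
    [FiniteDimensional ℝ V] [NormedAddCommGroup W] [NormedSpace ℝ W] [FiniteDimensional ℝ W]
    {K : Set V} (hK : IsCompact K) {U : Set W} (hU : IsOpen U) (f : C(K, U)) :
    ∃ g : V → W, ContDiff ℝ 1 g ∧ ∀ x : K, segment ℝ (f x : W) (g x) ⊆ U := by
  have : CompactSpace K := isCompact_iff_compactSpace.1 hK
  obtain ⟨δ, hδ, hball⟩ := exists_forall_ball_subset hU f
  obtain ⟨F, hF⟩ := ContinuousMap.exists_restrict_eq hK.isClosed
    ((⟨_, continuous_subtype_val⟩ : C(U, W)).comp f)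
  obtain ⟨g, hg, hgF, -⟩ := F.continuous.exists_contDiff_approx 1
    (continuous_const (y := δ)) fun _ => hδ
  have hFf : ∀ x : K, F x = f x := fun x => DFunLike.congr_fun hF x
  refine ⟨g, hg, fun x => ((convex_ball _ _).segment_subset (mem_ball_self hδ) ?_).trans (hball x)⟩
  rw [mem_ball, ← hFf]
  exact hgF x

end Homotopy

section SphereExtension

variable {V : Type*} [NormedAddCommGroup V] [NormedSpace ℝ V]

/-- The radial contraction `(t, z) ↦ (1 - t) • z` of the unit sphere to the origin, which exhibits
the closed unit ball as the cone over the sphere. -/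
def radialContraction (V : Type*) [NormedAddCommGroup V] [NormedSpace ℝ V] :
    C(I × sphere (0 : V) 1, closedBall (0 : V) 1) where
  toFun p := ⟨(1 - (p.1 : ℝ)) • (p.2 : V), by
    simpa [norm_smul, abs_of_nonneg (sub_nonneg.2 p.1.2.2)] using p.1.2.1⟩
  continuous_toFun := by fun_prop

theorem norm_radialContraction (p : I × sphere (0 : V) 1) :
    ‖(radialContraction V p : V)‖ = 1 - p.1 := by
  simp [radialContraction, norm_smul, abs_of_nonneg (sub_nonneg.2 p.1.2.2)]

theorem radialContraction_surjective [Nontrivial V] : Surjective (radialContraction V) := by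
  rintro ⟨z, hz⟩
  rw [mem_closedBall_zero_iff] at hz
  obtain ⟨u, hu, hzu⟩ : ∃ u : V, ‖u‖ = 1 ∧ ‖z‖ • u = z := by
    rcases eq_or_ne z 0 with rfl | h0
    · obtain ⟨u, hu⟩ := exists_norm_eq V zero_le_one
      exact ⟨u, hu, by simp⟩
    · exact ⟨‖z‖⁻¹ • z, norm_smul_inv_norm h0, smul_inv_smul₀ (norm_ne_zero_iff.2 h0) z⟩
  refine ⟨(⟨1 - ‖z‖, by linarith, by linarith [norm_nonneg z]⟩, ⟨u, by simpa using hu⟩), ?_⟩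
  simp [radialContraction, hzu]

theorem exists_closedBall_extension_of_nullhomotopic [ProperSpace V] [Nontrivial V] {X : Type*}
    [TopologicalSpace X] {f : C(sphere (0 : V) 1, X)} (hf : f.Nullhomotopic) :
    ∃ F : C(closedBall (0 : V) 1, X), ∀ z : sphere (0 : V) 1,
      F ⟨z, sphere_subset_closedBall z.2⟩ = f z := by
  obtain ⟨x₀, ⟨H⟩⟩ := hf
  have hquot : IsQuotientMap (radialContraction V) :=
    .of_surjective_continuous radialContraction_surjective (map_continuous _)
  have hfactor : FactorsThrough H.toContinuousMap (radialContraction V) := by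
    rintro ⟨t, z⟩ ⟨t', z'⟩ heq
    obtain rfl : t = t' := Subtype.ext <| by
      have hnorm := norm_radialContraction (t, z)
      rw [heq, norm_radialContraction] at hnorm
      linarith
    rcases eq_or_ne t 1 with rfl | ht
    · exact (H.apply_one z).trans (H.apply_one z').symm
    · have ht' : 1 - (t : ℝ) ≠ 0 := sub_ne_zero.2 fun h => ht (Subtype.ext h.symm)
      obtain rfl : z = z' := Subtype.ext (smul_right_injective V ht' (congrArg Subtype.val heq))
      rfl
  refine ⟨hquot.lift H.toContinuousMap hfactor, fun z => ?_⟩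
  have hz : radialContraction V (0, z) = ⟨z, sphere_subset_closedBall z.2⟩ := by
    simp [radialContraction]
  rw [← hz, ← ContinuousMap.comp_apply, IsQuotientMap.lift_comp]
  exact H.apply_zero z

end SphereExtension

section HomotopyGroup

variable {m : ℕ}

theorem exists_abs_apply_eq_norm {ι : Type*} [Fintype ι] [Nonempty ι] (z : ι → ℝ) :
    ∃ i, |z i| = ‖z‖ := by
  obtain ⟨i, hi⟩ := Finite.exists_max fun i => |z i|
  exact ⟨i, le_antisymm (norm_le_pi_norm z i)
    ((pi_norm_le_iff_of_nonneg (abs_nonneg _)).2 hi)⟩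

/-- The cylinder `I × I^m` rescaled to the unit ball `[-1, 1]^(m+1)` of the sup norm, with the
bottom `t = 0` going to the face where the zeroth coordinate is `1`. -/
def cylinderToBall (m : ℕ) : C(I × (I^(Fin m)), closedBall (0 : Fin (m + 1) → ℝ) 1) where
  toFun p := ⟨Fin.cons (1 - 2 * (p.1 : ℝ)) fun i => 2 * (p.2 i : ℝ) - 1, by
    rw [mem_closedBall_zero_iff, pi_norm_le_iff_of_nonneg zero_le_one]
    refine Fin.cases ?_ fun i => ?_
    · rw [Fin.cons_zero, Real.norm_eq_abs, abs_le]
      constructor <;> linarith [p.1.2.1, p.1.2.2]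
    · rw [Fin.cons_succ, Real.norm_eq_abs, abs_le]
      constructor <;> linarith [(p.2 i).2.1, (p.2 i).2.2]⟩
  continuous_toFun := by
    refine Continuous.subtype_mk (continuous_pi <| Fin.cases ?_ fun i => ?_) _
    · simp only [Fin.cons_zero]
      fun_prop
    · simp only [Fin.cons_succ]
      fun_prop

theorem cylinderToBall_mem_sphere {p : I × (I^(Fin m))} {i : Fin (m + 1)}
    (hi : |(cylinderToBall m p).1 i| = 1) :
    (cylinderToBall m p : Fin (m + 1) → ℝ) ∈ sphere 0 1 :=
  mem_sphere_zero_iff_norm.2 <| le_antisymm (mem_closedBall_zero_iff.1 (cylinderToBall m p).2)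
    (hi.symm.trans_le (norm_le_pi_norm (cylinderToBall m p).1 i))

/-- The projection of `ℝ^(m+1)` onto the cube `I^m` forgetting the zeroth coordinate and clamping
the others; it inverts `cylinderToBall` up to the cylinder coordinate. -/
noncomputable def ballToCube (m : ℕ) : C(Fin (m + 1) → ℝ, I^(Fin m)) where
  toFun z i := projIcc 0 1 zero_le_one ((z i.succ + 1) / 2)
  continuous_toFun := continuous_pi fun _ => continuous_projIcc.comp (by fun_prop)

theorem ballToCube_cylinderToBall (p : I × (I^(Fin m))) :
    ballToCube m (cylinderToBall m p) = p.2 := by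
  ext i
  simp [ballToCube, cylinderToBall]

theorem ballToCube_mem_boundary {z : Fin (m + 1) → ℝ} (hz : ‖z‖ = 1) (h0 : |z 0| ≠ 1) :
    ballToCube m z ∈ Cube.boundary (Fin m) := by
  obtain ⟨i, hi⟩ := exists_abs_apply_eq_norm z
  rw [hz] at hi
  obtain ⟨i, rfl⟩ := Fin.exists_succ_eq.2 fun h => h0 (h ▸ hi)
  rcases (abs_eq zero_le_one).1 hi with h | h
  · exact ⟨i, .inr <| by norm_num [ballToCube, h, projIcc_eq_one]⟩
  · exact ⟨i, .inl <| by norm_num [ballToCube, h, projIcc_eq_zero]⟩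

variable {X : Type*} [TopologicalSpace X] {e : X}

/-- The map on the boundary of `[-1, 1]^(m+1)` that is a given loop on the upper half and constant
on the lower half. -/
noncomputable def sphereMapOfGenLoop (f : GenLoop (Fin m) X e) :
    C(sphere (0 : Fin (m + 1) → ℝ) 1, X) where
  toFun z := if 0 ≤ z.1 0 then f (ballToCube m z) else e
  continuous_toFun := by
    refine Continuous.if_le
      (f.1.continuous.comp ((ballToCube m).continuous.comp continuous_subtype_val))
      continuous_const continuous_const ((continuous_apply 0).comp continuous_subtype_val) ?_
    intro z hz
    exact f.2 _ (ballToCube_mem_boundary (mem_sphere_zero_iff_norm.1 z.2) (by simp [← hz]))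

theorem genLoop_homotopic_const (f : GenLoop (Fin m) X e)
    (hf : (sphereMapOfGenLoop f).Nullhomotopic) : GenLoop.Homotopic f GenLoop.const := by
  obtain ⟨F, hF⟩ := exists_closedBall_extension_of_nullhomotopic hf
  have hFc : ∀ p i, |(cylinderToBall m p).1 i| = 1 →
      F (cylinderToBall m p) = if 0 ≤ (cylinderToBall m p).1 0 then f p.2 else e := by
    intro p i hi
    have h := hF ⟨cylinderToBall m p, cylinderToBall_mem_sphere hi⟩
    simpa only [sphereMapOfGenLoop, ContinuousMap.coe_mk, ballToCube_cylinderToBall] using h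
  refine ⟨⟨⟨F.comp (cylinderToBall m), fun y => ?_, fun y => ?_⟩, ?_⟩⟩
  · exact (hFc (0, y) 0 (by simp [cylinderToBall])).trans (if_pos (by simp [cylinderToBall]))
  · exact (hFc (1, y) 0 (by norm_num [cylinderToBall])).trans
      (if_neg (by norm_num [cylinderToBall]))
  · rintro t y ⟨i, hi⟩
    refine (hFc (t, y) i.succ (by rcases hi with h | h <;> norm_num [cylinderToBall, h])).trans ?_
    rw [show f y = e from f.2 y ⟨i, hi⟩, ite_self]
    exact (f.2 y ⟨i, hi⟩).symm

theorem subsingleton_homotopyGroup_of_nullhomotopic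
    (hX : ∀ f : C(sphere (0 : Fin (m + 1) → ℝ) 1, X), f.Nullhomotopic) (e : X) :
    Subsingleton (HomotopyGroup (Fin m) X e) := by
  refine ⟨Quotient.ind₂ fun f g => Quotient.sound ?_⟩
  exact (genLoop_homotopic_const f (hX _)).trans (genLoop_homotopic_const g (hX _)).symm

theorem pathConnectedSpace_of_nullhomotopic [Nonempty X]
    (hX : ∀ f : C(sphere (0 : Fin 1 → ℝ) 1, X), f.Nullhomotopic) : PathConnectedSpace X := by
  let e : X := Classical.arbitrary X
  have : Subsingleton (HomotopyGroup (Fin 0) X e) :=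
    subsingleton_homotopyGroup_of_nullhomotopic hX e
  exact pathConnectedSpace_iff_zerothHomotopy.2
    ⟨⟨Quotient.mk _ e⟩, (HomotopyGroup.pi0EquivZerothHomotopy (x := e)).symm.subsingleton⟩

end HomotopyGroup

section GenericDirection

variable {V E : Type*} [NormedAddCommGroup V] [NormedSpace ℝ V] [FiniteDimensional ℝ V]
  [NormedAddCommGroup E] [NormedSpace ℝ E]

theorem dimH_setOf_abs_eq_norm_le : dimH {p : ℝ × V | |p.1| = ‖p.2‖} ≤ finrank ℝ V := by
  have hsub : {p : ℝ × V | |p.1| = ‖p.2‖} ⊆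
      range (fun z : V => (‖z‖, z)) ∪ range fun z : V => (-‖z‖, z) := by
    rintro ⟨s, z⟩ hs
    rcases (abs_eq (norm_nonneg z)).1 hs with rfl | rfl
    exacts [.inl ⟨z, rfl⟩, .inr ⟨z, rfl⟩]
  refine (dimH_mono hsub).trans ?_
  rw [dimH_union, ← Real.dimH_univ_eq_finrank V]
  exact max_le (lipschitzWith_one_norm.prodMk .id).dimH_range_le
    (lipschitzWith_one_norm.neg.prodMk .id).dimH_range_le

theorem dimH_iUnion_span_image_sphere_le {g : V → E} (hg : ContDiff ℝ 1 g) :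
    dimH (⋃ x ∈ sphere (0 : V) 1, (ℝ ∙ g x : Set E)) ≤ finrank ℝ V := by
  let cone : Set (ℝ × V) := {p | |p.1| = ‖p.2‖}
  -- The substitution `z = s • x` turns `ℝ × sphere` into a double cone.
  let Φ : ℝ × V → E := fun p => p.1 • g (p.1⁻¹ • p.2)
  have hsub : ⋃ x ∈ sphere (0 : V) 1, (ℝ ∙ g x : Set E) ⊆ Φ '' (cone ∩ {p | p.1 ≠ 0}) ∪ {0} := by
    simp only [iUnion_subset_iff]
    rintro x hx _ h
    obtain ⟨s, rfl⟩ := Submodule.mem_span_singleton.1 h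
    rcases eq_or_ne s 0 with rfl | hs
    · simp
    · refine .inl ⟨(s, s • x), ⟨?_, hs⟩, by simp [Φ, hs]⟩
      simp [cone, norm_smul, mem_sphere_zero_iff_norm.1 hx]
  have hΦ : dimH (Φ '' (cone ∩ {p | p.1 ≠ 0})) ≤ dimH (cone ∩ {p | p.1 ≠ 0}) := by
    refine dimH_image_le_of_locally_lipschitzOn fun p hp => ?_
    have hcont : ContDiffAt ℝ 1 Φ p := contDiffAt_fst.smul <|
      hg.contDiffAt.comp p ((contDiffAt_fst.inv hp.2).smul contDiffAt_snd)
    obtain ⟨C, t, ht, hlip⟩ := hcont.exists_lipschitzOnWith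
    exact ⟨C, t, mem_nhdsWithin_of_mem_nhds ht, hlip⟩
  refine (dimH_mono hsub).trans ?_
  rw [dimH_union, dimH_singleton, max_eq_left zero_le]
  exact hΦ.trans ((dimH_mono inter_subset_left).trans dimH_setOf_abs_eq_norm_le)

theorem exists_forall_notMem_span_image_sphere [FiniteDimensional ℝ E]
    (hVE : finrank ℝ V < finrank ℝ E) {α : Type*} [Countable α] {g : α → V → E}
    (hg : ∀ q, ContDiff ℝ 1 (g q)) : ∃ v, ∀ q, ∀ x ∈ sphere (0 : V) 1, v ∉ ℝ ∙ g q x := by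
  have hdim : dimH (⋃ q, ⋃ x ∈ sphere (0 : V) 1, (ℝ ∙ g q x : Set E)) < finrank ℝ E := by
    rw [dimH_iUnion]
    exact (iSup_le fun q => dimH_iUnion_span_image_sphere_le (hg q)).trans_lt (mod_cast hVE)
  obtain ⟨v, hv⟩ := (dense_compl_of_dimH_lt_finrank hdim).nonempty
  exact ⟨v, by simpa using hv⟩

end GenericDirection

section PointConfigs

/-- The space of configurations of distinct points of `U`, labelled by `ι`. -/
def PointConfigs (ι : Type*) {E : Type*} (U : Set E) : Set (ι → E) :=
  {x | (∀ j, x j ∈ U) ∧ Injective x}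

variable {ι E : Type*}

theorem pointConfigs_mono {U U' : Set E} (h : U ⊆ U') : PointConfigs ι U ⊆ PointConfigs ι U' :=
  fun _ hx => ⟨fun j => h (hx.1 j), hx.2⟩

theorem isOpen_pointConfigs [Finite ι] [TopologicalSpace E] [T2Space E] {U : Set E}
    (hU : IsOpen U) : IsOpen (PointConfigs ι U) := by
  have heq : PointConfigs ι U =
      (⋂ j, {x | x j ∈ U}) ∩ ⋂ (j) (j') (_ : j ≠ j'), {x | x j ≠ x j'} := by
    ext x
    simp [PointConfigs, Function.Injective, not_imp_not]
  rw [heq]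
  refine (isOpen_iInter_of_finite fun j => hU.preimage (continuous_apply j)).inter ?_
  exact isOpen_iInter_of_finite fun j => isOpen_iInter_of_finite fun j' =>
    isOpen_iInter_of_finite fun _ => isOpen_ne_fun (continuous_apply j) (continuous_apply j')

section Collinear

variable [AddCommGroup E] [Module ℝ E] {U : Set E}

theorem exists_injective_add_smul_mem [Countable ι] [TopologicalSpace E] [ContinuousAdd E]
    [ContinuousSMul ℝ E] (hU : IsOpen U) {c : E} (hc : c ∈ U) (v : E) :
    ∃ s : ι → ℝ, Injective s ∧ ∀ j, c + s j • v ∈ U := by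
  have hnhds : {t : ℝ | c + t • v ∈ U} ∈ 𝓝 0 :=
    (show Continuous fun t : ℝ => c + t • v by fun_prop).continuousAt.preimage_mem_nhds <|
      hU.mem_nhds (by simpa using hc)
  let s := (infinite_of_mem_nhds 0 hnhds).natEmbedding
  obtain ⟨n, hn⟩ := Countable.exists_injective_nat ι
  exact ⟨fun j => s (n j), Subtype.val_injective.comp (s.injective.comp hn), fun j => (s (n j)).2⟩

theorem pointConfigs_nonempty [Countable ι] [TopologicalSpace E] [ContinuousAdd E]
    [ContinuousSMul ℝ E] [Nontrivial E] (hU : IsOpen U) (hne : U.Nonempty) :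
    (PointConfigs ι U).Nonempty := by
  obtain ⟨c, hc⟩ := hne
  obtain ⟨v, hv⟩ := exists_ne (0 : E)
  obtain ⟨s, hs, hmem⟩ := exists_injective_add_smul_mem (ι := ι) hU hc v
  exact ⟨_, hmem, (add_right_injective c).comp ((smul_left_injective ℝ hv).comp hs)⟩

theorem segment_subset_pointConfigs (hU : Convex ℝ U) {y : ι → E} (hy : y ∈ PointConfigs ι U)
    {c v : E} {s : ι → ℝ} (hs : Injective s) (hmem : ∀ j, c + s j • v ∈ U)
    (hv : ∀ j j', v ∉ ℝ ∙ (y j - y j')) :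
    segment ℝ y (fun j => c + s j • v) ⊆ PointConfigs ι U := by
  rintro _ ⟨r, t, hr, ht, hrt, rfl⟩
  refine ⟨fun j => hU (hy.1 j) (hmem j) hr ht hrt, fun j j' heq => ?_⟩
  by_contra hj
  have hsum : r • (y j - y j') + (t * (s j - s j')) • v = 0 := by
    rw [← sub_eq_zero] at heq
    rw [← heq]
    simp only [Pi.add_apply, Pi.smul_apply]
    module
  rcases eq_or_ne t 0 with rfl | ht0
  · obtain rfl : r = 1 := by simpa using hrt
    exact hj (hy.2 (by simpa [sub_eq_zero] using hsum))
  · have hcoef : t * (s j - s j') ≠ 0 := mul_ne_zero ht0 (sub_ne_zero.2 (hs.ne hj))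
    refine hv j j' ((Submodule.smul_mem_iff _ hcoef).1 ?_)
    rw [eq_neg_of_add_eq_zero_right hsum]
    exact neg_mem (Submodule.smul_mem _ r (Submodule.mem_span_singleton_self _))

end Collinear

theorem nullhomotopic_sphere_pointConfigs {V : Type*} [NormedAddCommGroup V] [NormedSpace ℝ V]
    [FiniteDimensional ℝ V] [Nontrivial V] [Finite ι] [NormedAddCommGroup E] [NormedSpace ℝ E]
    [FiniteDimensional ℝ E] (hVE : finrank ℝ V < finrank ℝ E) {U : Set E} (hU : IsOpen U)
    (hconv : Convex ℝ U) (hne : U.Nonempty) (f : C(sphere (0 : V) 1, PointConfigs ι U)) :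
    f.Nullhomotopic := by
  have := Fintype.ofFinite ι
  have := FiniteDimensional.proper_real V
  obtain ⟨c, hc⟩ := hne
  obtain ⟨g, hg, hfg⟩ :=
    exists_contDiff_segment_subset (isCompact_sphere _ _) (isOpen_pointConfigs hU) f
  let g' : C(sphere (0 : V) 1, PointConfigs ι U) :=
    ⟨fun x => ⟨g x, hfg x (right_mem_segment ℝ _ _)⟩,
      (hg.continuous.comp continuous_subtype_val).subtype_mk _⟩
  obtain ⟨v, hv⟩ := exists_forall_notMem_span_image_sphere hVE
    (g := fun (q : ι × ι) x => g x q.1 - g x q.2)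
    fun q => (contDiff_pi.1 hg q.1).sub (contDiff_pi.1 hg q.2)
  obtain ⟨s, hs, hmem⟩ := exists_injective_add_smul_mem (ι := ι) hU hc v
  have hseg : ∀ x : sphere (0 : V) 1,
      segment ℝ (g x) (fun j => c + s j • v) ⊆ PointConfigs ι U := fun x =>
    segment_subset_pointConfigs hconv (g' x).2 hs hmem fun j j' => hv (j, j') x x.2
  obtain ⟨x₀⟩ : Nonempty (sphere (0 : V) 1) :=
    (NormedSpace.sphere_nonempty.2 zero_le_one).to_subtype
  exact ⟨⟨_, hseg x₀ (right_mem_segment ℝ _ _)⟩,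
    (homotopic_of_segment_subset f g' hfg).trans (homotopic_of_segment_subset g' _ hseg)⟩

end PointConfigs

section Boxes

/-- The open box `∏ i, (a i, b i)`. -/
def openBox {κ : Type*} (a b : κ → ℝ) : Set (κ → ℝ) :=
  univ.pi fun i => Ioo (a i) (b i)

section OpenBox

variable {κ : Type*} {a b : κ → ℝ}

theorem isOpen_openBox [Finite κ] : IsOpen (openBox a b) :=
  isOpen_set_pi finite_univ fun _ _ => isOpen_Ioo

theorem convex_openBox : Convex ℝ (openBox a b) :=
  convex_pi fun _ _ => convex_Ioo _ _

theorem openBox_nonempty (hab : ∀ i, a i < b i) : (openBox a b).Nonempty :=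
  univ_pi_nonempty_iff.2 fun i => nonempty_Ioo.2 (hab i)

theorem openBox_subset_Icc : openBox a b ⊆ Icc a b :=
  fun _ hz => ⟨fun i => (hz i trivial).1.le, fun i => (hz i trivial).2.le⟩

end OpenBox

variable {k ℓ : ℕ} {a b : Fin k → ℝ} {t t' : Fin ℓ → (Fin k → ℝ) × (Fin k → ℝ)}

theorem mem_boxTuples_iff_forall_selection :
    t ∈ BoxTuples k ℓ a b ↔ (∀ j i, (t j).1 i < (t j).2 i) ∧
      ∀ y : Fin ℓ → Fin k → ℝ, (∀ j, y j ∈ Icc (t j).1 (t j).2) →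
        y ∈ PointConfigs (Fin ℓ) (Icc a b) := by
  classical
  refine and_congr_right fun hlt => ⟨fun ⟨hsub, hdisj⟩ y hy => ⟨fun j => hsub j (hy j), ?_⟩,
    fun h => ⟨fun j z hz => ?_, fun j j' hj => disjoint_left.2 fun z hz hz' => ?_⟩⟩
  · intro j j' heq
    by_contra hj
    exact disjoint_left.1 (hdisj j j' hj) (hy j) (heq ▸ hy j')
  all_goals
    have hsel := h (fun j => if z ∈ Icc (t j).1 (t j).2 then z else (t j).1) fun j => by
      split_ifs with hzj
      exacts [hzj, left_mem_Icc.2 fun i => (hlt j i).le]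
  · simpa only [if_pos hz] using hsel.1 j
  · exact hj (hsel.2 (by simp only [if_pos hz, if_pos hz']))

theorem mem_boxTuples_of_Icc_subset (ht : t ∈ BoxTuples k ℓ a b)
    (hlt : ∀ j i, (t' j).1 i < (t' j).2 i)
    (hsub : ∀ j, Icc (t' j).1 (t' j).2 ⊆ Icc (t j).1 (t j).2) : t' ∈ BoxTuples k ℓ a b :=
  ⟨hlt, fun j => (hsub j).trans (ht.2.1 j), fun j j' hj =>
    (ht.2.2 j j' hj).mono (hsub j) (hsub j')⟩

theorem homotopic_of_subboxes {Y : Type*} [TopologicalSpace Y] (f g : C(Y, BoxTuples k ℓ a b))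
    (hl : ∀ y j, ((f y).1 j).1 ≤ ((g y).1 j).1) (hr : ∀ y j, ((g y).1 j).2 ≤ ((f y).1 j).2) :
    f.Homotopic g := by
  refine homotopic_of_segment_subset f g fun y => ?_
  rintro _ ⟨r, s, hr₀, hs₀, hrs, rfl⟩
  refine mem_boxTuples_of_Icc_subset (f y).2 (fun j i => ?_) fun j => Icc_subset_Icc ?_ ?_
  · have hpos :=
      convex_Ioi (0 : ℝ) (sub_pos.2 ((f y).2.1 j i)) (sub_pos.2 ((g y).2.1 j i)) hr₀ hs₀ hrs
    simp only [mem_Ioi, smul_eq_mul] at hpos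
    simp only [Pi.add_apply, Pi.smul_apply, Prod.fst_add, Prod.snd_add, Prod.smul_fst,
      Prod.smul_snd, smul_eq_mul]
    linarith
  · exact convex_Ici _ (mem_Ici.2 le_rfl) (mem_Ici.2 (hl y j)) hr₀ hs₀ hrs
  · exact convex_Iic _ (mem_Iic.2 le_rfl) (mem_Iic.2 (hr y j)) hr₀ hs₀ hrs

/-- The centers of a tuple of boxes. -/
noncomputable def boxCenters (t : Fin ℓ → (Fin k → ℝ) × (Fin k → ℝ)) : Fin ℓ → Fin k → ℝ :=
  fun j i => ((t j).1 i + (t j).2 i) / 2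

theorem boxCenters_mem_pointConfigs (ht : t ∈ BoxTuples k ℓ a b) :
    boxCenters t ∈ PointConfigs (Fin ℓ) (openBox a b) := by
  obtain ⟨hlt, hsel⟩ := mem_boxTuples_iff_forall_selection.1 ht
  have hleft : ∀ j i, (t j).1 i < boxCenters t j i := fun j i => left_lt_add_div_two.2 (hlt j i)
  have hright : ∀ j i, boxCenters t j i < (t j).2 i := fun j i => add_div_two_lt_right.2 (hlt j i)
  refine ⟨fun j i _ => ?_, (hsel _ fun j => ⟨fun i => (hleft j i).le, fun i => (hright j i).le⟩).2⟩
  obtain ⟨ha, hb⟩ := (Icc_subset_Icc_iff fun i => (hlt j i).le).1 (ht.2.1 j)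
  exact ⟨(ha i).trans_lt (hleft j i), (hright j i).trans_le (hb i)⟩

/-- Taking centers, as a continuous map from tuples of boxes to configurations. -/
noncomputable def centersMap :
    C(BoxTuples k ℓ a b, PointConfigs (Fin ℓ) (openBox a b)) where
  toFun t := ⟨boxCenters t, boxCenters_mem_pointConfigs t.2⟩
  continuous_toFun := by
    have hcenters : Continuous (boxCenters (k := k) (ℓ := ℓ)) := by
      unfold boxCenters
      fun_prop
    exact (hcenters.comp continuous_subtype_val).subtype_mk _

/-- The cubes of side `2 * r` around the points of `x`. -/
def cubes (x : Fin ℓ → Fin k → ℝ) (r : ℝ) : Fin ℓ → (Fin k → ℝ) × (Fin k → ℝ) :=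
  fun j => (fun i => x j i - r, fun i => x j i + r)

theorem cubes_mem_boxTuples {x : Fin ℓ → Fin k → ℝ} {r δ : ℝ} (hr : 0 < r) (hrδ : r < δ)
    (hball : ball x δ ⊆ PointConfigs (Fin ℓ) (openBox a b)) : cubes x r ∈ BoxTuples k ℓ a b := by
  refine mem_boxTuples_iff_forall_selection.2
    ⟨fun j i => by simp only [cubes]; linarith, fun y hy => ?_⟩
  refine pointConfigs_mono openBox_subset_Icc (hball (lt_of_le_of_lt ?_ hrδ))
  refine (dist_pi_le_iff hr.le).2 fun j => (dist_pi_le_iff hr.le).2 fun i => ?_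
  rw [← mem_closedBall, Real.closedBall_eq_Icc]
  exact ⟨(hy j).1 i, (hy j).2 i⟩

theorem boxTuples_nonempty (hk : 1 ≤ k) (hab : ∀ i, a i < b i) :
    (BoxTuples k ℓ a b).Nonempty := by
  have : Nonempty (Fin k) := ⟨⟨0, hk⟩⟩
  obtain ⟨x, hx⟩ := pointConfigs_nonempty (ι := Fin ℓ) isOpen_openBox (openBox_nonempty hab)
  obtain ⟨δ, hδ, hball⟩ := Metric.isOpen_iff.1 (isOpen_pointConfigs isOpen_openBox) x hx
  exact ⟨_, cubes_mem_boxTuples (half_pos hδ) (half_lt_self hδ) hball⟩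

variable {Y : Type*} [TopologicalSpace Y]

/-- The cubes of side `2 * r` around a continuous family of configurations that stays at distance
at least `δ > r` from the complement of the configuration space. -/
def cubesMap {r δ : ℝ} (hr : 0 < r) (hrδ : r < δ)
    (g : C(Y, PointConfigs (Fin ℓ) (openBox a b)))
    (hball : ∀ y, ball (g y : Fin ℓ → Fin k → ℝ) δ ⊆ PointConfigs (Fin ℓ) (openBox a b)) :
    C(Y, BoxTuples k ℓ a b) where
  toFun y := ⟨cubes (g y) r, cubes_mem_boxTuples hr hrδ (hball y)⟩
  continuous_toFun := by
    have hcubes : Continuous fun x : Fin ℓ → Fin k → ℝ => cubes x r := by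
      unfold cubes
      fun_prop
    exact (hcubes.comp (continuous_subtype_val.comp g.continuous)).subtype_mk _

theorem exists_pos_forall_le_sides [CompactSpace Y] (f : C(Y, BoxTuples k ℓ a b)) :
    ∃ w > 0, ∀ y j i, w ≤ ((f y).1 j).2 i - ((f y).1 j).1 i := by
  let side (q : Fin ℓ × Fin k) (t : Fin ℓ → (Fin k → ℝ) × (Fin k → ℝ)) : ℝ :=
    (t q.1).2 q.2 - (t q.1).1 q.2
  have hside : Continuous fun p : Y × (Fin ℓ × Fin k) => side p.2 (f p.1) :=
    continuous_prod_of_discrete_right.2 fun q =>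
      (show Continuous (side q) by fun_prop).comp (continuous_subtype_val.comp f.continuous)
  obtain ⟨w, hw, hle⟩ := isCompact_univ.exists_forall_le' hside.continuousOn (a := 0)
    fun p _ => sub_pos.2 ((f p.1).2.1 p.2.1 p.2.2)
  exact ⟨w, hw, fun y j i => hle (y, j, i) trivial⟩

theorem nullhomotopic_of_nullhomotopic_centers [CompactSpace Y] [Nonempty Y]
    {f : C(Y, BoxTuples k ℓ a b)} (hf : (centersMap.comp f).Nullhomotopic) :
    f.Nullhomotopic := by
  obtain ⟨p, ⟨H⟩⟩ := hf
  obtain ⟨δ, hδ, hball⟩ :=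
    exists_forall_ball_subset (isOpen_pointConfigs isOpen_openBox) H.toContinuousMap
  obtain ⟨w, hw, hside⟩ := exists_pos_forall_le_sides f
  obtain ⟨r, hr, hrlt⟩ := exists_between (lt_min hδ (half_pos hw))
  obtain ⟨hrδ, hrw⟩ := lt_min_iff.1 hrlt
  let Γ : C(I × Y, BoxTuples k ℓ a b) := cubesMap hr hrδ H.toContinuousMap hball
  let Γ₀ : C(Y, BoxTuples k ℓ a b) := Γ.comp (.prodMk (.const Y 0) (.id Y))
  have hshrink : f.Homotopic Γ₀ := by
    have hΓ₀ : ∀ y, (Γ₀ y).1 = cubes (boxCenters (f y).1) r := fun y =>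
      congrArg (fun x : PointConfigs _ _ => cubes x.1 r) (H.apply_zero y)
    refine homotopic_of_subboxes f Γ₀ (fun y j i => ?_) fun y j i => ?_
    all_goals
      rw [hΓ₀]
      simp only [cubes, boxCenters]
      linarith [hside y j i]
  have hcontract : Γ₀.Homotopic (.const Y (Γ (1, Classical.arbitrary Y))) :=
    ⟨{ toContinuousMap := Γ
       map_zero_left := fun _ => rfl
       map_one_left := fun y => Subtype.ext <| by simp [Γ, cubesMap] }⟩
  exact ⟨_, hshrink.trans hcontract⟩

theorem nullhomotopic_sphere_boxTuples {V : Type*} [NormedAddCommGroup V] [NormedSpace ℝ V]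
    [FiniteDimensional ℝ V] [Nontrivial V] (hVk : finrank ℝ V < k) (hab : ∀ i, a i < b i)
    (f : C(sphere (0 : V) 1, BoxTuples k ℓ a b)) : f.Nullhomotopic := by
  have := FiniteDimensional.proper_real V
  have : Nonempty (sphere (0 : V) 1) := (NormedSpace.sphere_nonempty.2 zero_le_one).to_subtype
  exact nullhomotopic_of_nullhomotopic_centers <| nullhomotopic_sphere_pointConfigs
    (by simpa using hVk) isOpen_openBox convex_openBox (openBox_nonempty hab) _

end Boxes

/-- The space `E(B, ℓ)` of `ℓ`-tuples of pairwise disjoint sub-boxes of a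
nondegenerate box `B ⊆ ℝ^k` is `(k-2)`-connected: it is nonempty, path connected
when `k ≥ 2`, and its homotopy groups `π_m` vanish for `1 ≤ m ≤ k - 2`. -/
theorem statement13 (k ℓ : ℕ) (hk : 1 ≤ k) (a b : Fin k → ℝ)
    (hab : ∀ i, a i < b i) :
    (BoxTuples k ℓ a b).Nonempty ∧
    (2 ≤ k → PathConnectedSpace (BoxTuples k ℓ a b)) ∧
    (∀ e : BoxTuples k ℓ a b, ∀ m : ℕ, 1 ≤ m → m ≤ k - 2 →
      Subsingleton (HomotopyGroup (Fin m) (BoxTuples k ℓ a b) e)) := by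
  have hne : Nonempty (BoxTuples k ℓ a b) := (boxTuples_nonempty hk hab).to_subtype
  have hnull : ∀ m, m + 1 < k → ∀ f : C(sphere (0 : Fin (m + 1) → ℝ) 1, BoxTuples k ℓ a b),
      f.Nullhomotopic := fun m hm => nullhomotopic_sphere_boxTuples (by simpa using hm) hab
  refine ⟨nonempty_coe_sort.1 hne, fun hk₂ => ?_, fun e m hm hmk => ?_⟩
  · exact pathConnectedSpace_of_nullhomotopic (hnull 0 (by omega))
  · exact subsingleton_homotopyGroup_of_nullhomotopic (hnull m (by omega)) e
end

section
/- Fix k ≥ 1 and ℓ ≥ 0. The ordered configuration space of ℓ points in ℝ^k, i.e., the subspace {f : Fin ℓ → ℝ^k : f is injective} of (ℝ^k)^ℓ, is (k−2)-connected: it is nonempty; if k ≥ 2 it is path-connected; and for every basepoint f and every 1 ≤ m ≤ k−2, the homotopy group π_m of this space at f is trivial. -/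
/-- The ordered configuration space of `ℓ` points in `ℝ^k`: the subspace of
injective functions `Fin ℓ → ℝ^k` of the product space `(ℝ^k)^ℓ`. -/
def ConfigSpace (k ℓ : ℕ) : Set (Fin ℓ → (Fin k → ℝ)) :=
  {f | Function.Injective f}

/-!
The space of injective maps `ι → V` is the complement of finitely many subspaces of codimension
`n = dim V` in `ι → V`. If `dim E < n`, then every continuous map from a closed set `A ⊆ E` into
such a complement extends to `E` without meeting the subspaces: extend it to a map `F` into the
ambient space that is `C¹` off `A`, choose a `C¹` function `φ` with zero set `A`, and perturb `F` to
`F + φ • v`. The vectors `v` for which this fails form a countable union of `C¹` images of open sets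
of dimension smaller than that of the target, so almost every `v` works. Extending maps from the
empty set and from the boundary of `I × I^m` gives all the connectivity assertions.
-/

open Module Set Topology Filter Function MeasureTheory
open scoped unitInterval ContDiff Manifold

section HausdorffDimension

variable {E V : Type*} [NormedAddCommGroup E] [NormedSpace ℝ E] [FiniteDimensional ℝ E]
  [NormedAddCommGroup V] [NormedSpace ℝ V]

theorem dimH_image_le_finrank_of_isOpen {f : E → V} {O : Set E} (hO : IsOpen O)
    (hf : ContDiffOn ℝ 1 f O) : dimH (f '' O) ≤ finrank ℝ E :=
  calc
    dimH (f '' O) ≤ dimH O := dimH_image_le_of_locally_lipschitzOn fun _ hx =>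
      let ⟨K, t, ht, h⟩ := (hf.contDiffAt (hO.mem_nhds hx)).exists_lipschitzOnWith
      ⟨K, t, mem_nhdsWithin_of_mem_nhds ht, h⟩
    _ ≤ dimH (univ : Set E) := dimH_mono (subset_univ O)
    _ = finrank ℝ E := Real.dimH_univ_eq_finrank E

theorem dense_compl_iUnion_of_dimH_lt_finrank {ι : Type*} [Countable ι] {Z : ι → Set E}
    (hZ : ∀ i, dimH (Z i) < finrank ℝ E) : Dense (⋃ i, Z i)ᶜ := by
  borelize E
  have hnull (i : ι) : μH[finrank ℝ E] (Z i) = 0 := by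
    simpa only [NNReal.coe_natCast] using
      hausdorffMeasure_of_dimH_lt (d := finrank ℝ E) (by simpa using hZ i)
  exact Measure.dense_of_ae (compl_mem_ae_iff.2 (measure_iUnion_null hnull))

end HausdorffDimension

section GeneralPosition

variable {E V : Type*} [NormedAddCommGroup E] [NormedSpace ℝ E] [FiniteDimensional ℝ E]
  [NormedAddCommGroup V] [NormedSpace ℝ V]

theorem exists_continuous_contDiffOn_compl_eqOn {f : E → V} (hf : Continuous f) {A : Set E}
    (hA : IsClosed A) (n : ℕ∞) :
    ∃ F : E → V, Continuous F ∧ ContDiffOn ℝ n F Aᶜ ∧ EqOn F f A := by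
  classical
  obtain ⟨δ, hδ_supp, hδ, hδ_range⟩ := hA.isOpen_compl.exists_contDiff_support_eq (n := 0)
  have hδ_nonneg (x : E) : 0 ≤ δ x := (hδ_range (mem_range_self x)).1
  let U : TopologicalSpace.Opens E := ⟨Aᶜ, hA.isOpen_compl⟩
  have : LocallyCompactSpace U := U.isOpen.isOpenEmbedding_subtypeVal.locallyCompactSpace
  obtain ⟨g, hgf, -⟩ := (hf.comp continuous_subtype_val).exists_contMDiff_approx (M := U)
    𝓘(ℝ, E) n (hδ.continuous.comp continuous_subtype_val)
    fun x => (hδ_nonneg x).lt_of_ne' (hδ_supp.superset x.2)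
  let F (x : E) : V := if hx : x ∈ Aᶜ then g ⟨x, hx⟩ else f x
  have hF_eqOn : EqOn F f A := fun x hx => dif_neg (not_not_intro hx)
  have hF_compl (x : U) : F x = g x := dif_pos x.2
  have hF_smooth (x : E) (hx : x ∉ A) : ContDiffAt ℝ n F x := by
    have hFU : ContMDiffAt 𝓘(ℝ, E) 𝓘(ℝ, V) n (fun y : U => F y) ⟨x, hx⟩ := by
      simpa only [hF_compl] using g.contMDiff.contMDiffAt
    exact (contMDiffAt_subtype_iff.1 hFU).contDiffAt
  have hF_near (x : E) : dist (f x) (F x) ≤ δ x := by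
    by_cases hx : x ∈ A
    · simpa only [hF_eqOn hx, dist_self] using hδ_nonneg x
    · rw [dist_comm, hF_compl ⟨x, hx⟩]
      exact (hgf ⟨x, hx⟩).le
  refine ⟨F, continuous_iff_continuousAt.2 fun x => ?_, fun x hx =>
    (hF_smooth x hx).contDiffWithinAt, hF_eqOn⟩
  by_cases hx : x ∈ A
  · have hδx : δ x = 0 := notMem_support.1 fun h => hδ_supp.subset h hx
    have hδ_tendsto : Tendsto δ (𝓝 x) (𝓝 0) := hδx ▸ hδ.continuous.tendsto x
    rw [ContinuousAt, hF_eqOn hx]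
    exact (hf.tendsto x).congr_dist (squeeze_zero (fun _ => dist_nonneg) hF_near hδ_tendsto)
  · exact (hF_smooth x hx).continuousAt

variable [FiniteDimensional ℝ V] {ι : Type*} [Countable ι] {D : ι → Type*}
  [∀ i, NormedAddCommGroup (D i)] [∀ i, NormedSpace ℝ (D i)] [∀ i, FiniteDimensional ℝ (D i)]
  {s : ∀ i, D i → V}

theorem dense_setOf_forall_add_smul_notMem_range (hs : ∀ i, ContDiff ℝ 1 (s i))
    (hD : ∀ i, finrank ℝ E + finrank ℝ (D i) < finrank ℝ V) {O : Set E} (hO : IsOpen O)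
    {F : E → V} (hF : ContDiffOn ℝ 1 F O) {φ : E → ℝ} (hφ : ContDiffOn ℝ 1 φ O)
    (hφ_ne : ∀ e ∈ O, φ e ≠ 0) :
    Dense {v | ∀ e ∈ O, ∀ i, F e + φ e • v ∉ range (s i)} := by
  let bad (i : ι) (p : E × D i) : V := (φ p.1)⁻¹ • (s i p.2 - F p.1)
  have hbad_dimH (i : ι) : dimH (bad i '' (O ×ˢ univ)) < finrank ℝ V := by
    have hbad : ContDiffOn ℝ 1 (bad i) (O ×ˢ univ) := by
      have hfst : MapsTo Prod.fst (O ×ˢ (univ : Set (D i))) O := fun p hp => hp.1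
      exact ((hφ.comp contDiffOn_fst hfst).inv fun p hp => hφ_ne p.1 hp.1).smul
        (((hs i).comp_contDiffOn contDiffOn_snd).sub (hF.comp contDiffOn_fst hfst))
    refine (dimH_image_le_finrank_of_isOpen (hO.prod isOpen_univ) hbad).trans_lt ?_
    exact_mod_cast finrank_prod (R := ℝ) (M := E) (M' := D i) ▸ hD i
  refine (dense_compl_iUnion_of_dimH_lt_finrank hbad_dimH).mono fun v hv e he i ⟨w, hw⟩ => ?_
  refine hv (mem_iUnion.2 ⟨i, (e, w), ⟨he, mem_univ w⟩, ?_⟩)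
  simp only [bad, hw, add_sub_cancel_left, inv_smul_smul₀ (hφ_ne e he)]

theorem exists_continuous_eqOn_forall_notMem_range (hs : ∀ i, ContDiff ℝ 1 (s i))
    (hD : ∀ i, finrank ℝ E + finrank ℝ (D i) < finrank ℝ V) {A : Set E} (hA : IsClosed A)
    {f : E → V} (hf : Continuous f) :
    ∃ g : E → V, Continuous g ∧ EqOn g f A ∧ ∀ e ∉ A, ∀ i, g e ∉ range (s i) := by
  obtain ⟨F, hF_cont, hF, hFf⟩ := exists_continuous_contDiffOn_compl_eqOn hf hA 1
  obtain ⟨φ, hφ_supp, hφ, -⟩ := hA.isOpen_compl.exists_contDiff_support_eq (n := 1)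
  obtain ⟨v, hv⟩ := (dense_setOf_forall_add_smul_notMem_range hs hD hA.isOpen_compl hF
    hφ.contDiffOn fun e he => hφ_supp.superset he).nonempty
  refine ⟨fun e => F e + φ e • v, hF_cont.add (hφ.continuous.smul continuous_const),
    fun e he => ?_, hv⟩
  have hφe : φ e = 0 := notMem_support.1 fun h => hφ_supp.subset h he
  simp only [hφe, zero_smul, add_zero, hFf he]

end GeneralPosition

section Cube

theorem isClosed_cubeBoundary (N : Type*) [Finite N] : IsClosed (Cube.boundary N) := by
  simp only [Cube.boundary, ofPred_exists, ofPred_or]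
  exact isClosed_iUnion_of_finite fun i =>
    (isClosed_eq (continuous_apply i) continuous_const).union
      (isClosed_eq (continuous_apply i) continuous_const)

theorem isClosedEmbedding_prod_cube_coe (N : Type*) :
    IsClosedEmbedding fun z : I × (N → I) => ((z.1 : ℝ), fun i => (z.2 i : ℝ)) := by
  refine Continuous.isClosedEmbedding (by fun_prop) fun z w hzw => ?_
  simp only [Prod.mk.injEq, funext_iff, Subtype.coe_inj] at hzw
  exact Prod.ext hzw.1 (funext hzw.2)

theorem genLoop_homotopic_of_continuousMap {X N : Type*} [TopologicalSpace X] {x : X}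
    {p q : GenLoop N X x} (H : C(I × (N → I), X)) (h0 : ∀ y, H (0, y) = p y)
    (h1 : ∀ y, H (1, y) = q y) (hb : ∀ t, ∀ y ∈ Cube.boundary N, H (t, y) = x) :
    GenLoop.Homotopic p q :=
  ⟨⟨⟨H, h0, h1⟩, fun t y hy => (hb t y hy).trans (p.2 y hy).symm⟩⟩

end Cube

/-- `X` is an absolute extensor for Euclidean spaces of dimension less than `k`: continuous maps
from their closed subsets to `X` extend to the whole space. It suffices to quantify over the
coordinate spaces `Fin d → ℝ`, see `IsExtensorBelow.exists_extension`. -/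
def IsExtensorBelow (k : ℕ) (X : Type*) [TopologicalSpace X] : Prop :=
  ∀ d < k, ∀ A : Set (Fin d → ℝ), IsClosed A → ∀ f : C(A, X),
    ∃ g : C(Fin d → ℝ, X), g.restrict A = f

theorem isExtensorBelow_of_compl_subset_iUnion_range {V ι : Type*} [NormedAddCommGroup V]
    [NormedSpace ℝ V] [FiniteDimensional ℝ V] [Countable ι] {D : ι → Type*}
    [∀ i, NormedAddCommGroup (D i)] [∀ i, NormedSpace ℝ (D i)] [∀ i, FiniteDimensional ℝ (D i)]
    {s : ∀ i, D i → V} (hs : ∀ i, ContDiff ℝ 1 (s i)) {k : ℕ}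
    (hD : ∀ i, k + finrank ℝ (D i) ≤ finrank ℝ V) {U : Set V} (hU : Uᶜ ⊆ ⋃ i, range (s i)) :
    IsExtensorBelow k U := by
  intro d hd A hA f
  have := TietzeExtension.of_tvs ℝ (E := V)
  obtain ⟨F, hF⟩ := (ContinuousMap.comp ⟨Subtype.val, continuous_subtype_val⟩ f).exists_restrict_eq
    (Y := V) hA
  have hFf (a : A) : F a = f a := DFunLike.congr_fun hF a
  obtain ⟨g, hg_cont, hgF, hg_notMem⟩ := exists_continuous_eqOn_forall_notMem_range hs
    (fun i => by have := hD i; rw [finrank_fin_fun]; omega) hA F.continuous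
  have hg_mem (e : Fin d → ℝ) : g e ∈ U := by
    by_cases he : e ∈ A
    · rw [hgF he, hFf ⟨e, he⟩]
      exact (f ⟨e, he⟩).2
    · by_contra hge
      obtain ⟨i, hi⟩ := mem_iUnion.1 (hU hge)
      exact hg_notMem e he i hi
  exact ⟨⟨fun e => ⟨g e, hg_mem e⟩, hg_cont.subtype_mk hg_mem⟩, ContinuousMap.ext fun a =>
    Subtype.ext ((hgF a.2).trans (hFf a))⟩

namespace IsExtensorBelow

variable {k : ℕ} {X : Type*} [TopologicalSpace X]

theorem exists_extension (hX : IsExtensorBelow k X) {E K : Type*} [NormedAddCommGroup E]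
    [NormedSpace ℝ E] [FiniteDimensional ℝ E] (hE : finrank ℝ E < k) [TopologicalSpace K]
    {e : K → E} (he : IsClosedEmbedding e) (f : C(K, X)) :
    ∃ g : C(E, X), ∀ x, g (e x) = f x := by
  let L : E ≃L[ℝ] (Fin (finrank ℝ E) → ℝ) :=
    ContinuousLinearEquiv.ofFinrankEq (finrank_fin_fun ℝ).symm
  have hLe : IsClosedEmbedding (L ∘ e) := L.toHomeomorph.isClosedEmbedding.comp he
  let e' : K ≃ₜ range (L ∘ e) := hLe.isEmbedding.toHomeomorph
  obtain ⟨g, hg⟩ := hX _ hE _ hLe.isClosed_range (f.comp e'.symm)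
  refine ⟨g.comp L, fun x => ?_⟩
  have hgx : g (e' x) = f (e'.symm (e' x)) := DFunLike.congr_fun hg (e' x)
  rwa [e'.symm_apply_apply] at hgx

theorem nonempty (hX : IsExtensorBelow k X) (hk : 0 < k) : Nonempty X := by
  obtain ⟨g, -⟩ := hX 0 hk ∅ isClosed_empty ⟨isEmptyElim, continuous_of_const isEmptyElim⟩
  exact ⟨g 0⟩

theorem genLoop_homotopic (hX : IsExtensorBelow k X) {N : Type*} [Fintype N]
    (hN : Fintype.card N + 1 < k) {x : X} (p q : GenLoop N X x) : GenLoop.Homotopic p q := by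
  classical
  let bottom : Set (I × (N → I)) := {z | z.1 = 0}
  let rest : Set (I × (N → I)) := {z | z.1 = 1 ∨ z.2 ∈ Cube.boundary N}
  have hbottom : IsClosed bottom := isClosed_eq continuous_fst continuous_const
  have hrest : IsClosed rest := (isClosed_eq continuous_fst continuous_const).union
    ((isClosed_cubeBoundary N).preimage continuous_snd)
  let f (z : I × (N → I)) : X := if z.1 = 0 then p z.2 else q z.2
  have hf_bottom : EqOn f (fun z => p z.2) bottom := fun z hz => if_pos hz
  have hf_rest : EqOn f (fun z => q z.2) rest := by
    rintro ⟨t, y⟩ (rfl | hy)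
    · exact if_neg one_ne_zero
    · exact ite_eq_right_iff.2 fun _ => (p.2 y hy).trans (q.2 y hy).symm
  have hp : Continuous fun z : I × (N → I) => p z.2 := by fun_prop
  have hq : Continuous fun z : I × (N → I) => q z.2 := by fun_prop
  have hf : ContinuousOn f (bottom ∪ rest) := (hp.continuousOn.congr hf_bottom).union_of_isClosed
    (hq.continuousOn.congr hf_rest) hbottom hrest
  have he := isClosedEmbedding_prod_cube_coe N
  obtain ⟨g, hg⟩ := hX.exists_extension (by simpa [add_comm] using hN)
    (he.comp (hbottom.union hrest).isClosedEmbedding_subtypeVal) ⟨_, hf.domRestrict⟩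
  refine genLoop_homotopic_of_continuousMap (g.comp ⟨_, he.continuous⟩)
    (fun y => (hg ⟨(0, y), .inl rfl⟩).trans (hf_bottom rfl))
    (fun y => (hg ⟨(1, y), .inr (.inl rfl)⟩).trans (hf_rest (.inl rfl)))
    fun t y hy => (hg ⟨(t, y), .inr (.inr hy)⟩).trans ((hf_rest (.inr hy)).trans (q.2 y hy))

theorem subsingleton_homotopyGroup (hX : IsExtensorBelow k X) {N : Type*} [Fintype N]
    (hN : Fintype.card N + 1 < k) (x : X) : Subsingleton (HomotopyGroup N X x) :=
  ⟨Quotient.ind₂ fun p q => Quotient.sound (hX.genLoop_homotopic hN p q)⟩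

theorem pathConnectedSpace (hX : IsExtensorBelow k X) (hk : 2 ≤ k) : PathConnectedSpace X := by
  obtain ⟨x⟩ := hX.nonempty (by omega)
  have := hX.subsingleton_homotopyGroup (N := Fin 0) (by rwa [Fintype.card_fin]) x
  exact pathConnectedSpace_iff_zerothHomotopy.2
    ⟨⟨Quotient.mk _ x⟩, (HomotopyGroup.pi0EquivZerothHomotopy (x := x)).symm.subsingleton⟩

end IsExtensorBelow

section Diagonal

variable {R M ι : Type*} [DivisionRing R] [AddCommGroup M] [Module R M]

variable (R M) in
/-- The diagonal `f i = f j` in the space of families `ι → M`, the locus along which the `i`-th and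
`j`-th points collide. -/
def pairDiagonal (i j : ι) : Submodule R (ι → M) :=
  LinearMap.eqLocus (LinearMap.proj i : (ι → M) →ₗ[R] M) (LinearMap.proj j)

theorem finrank_add_finrank_pairDiagonal [FiniteDimensional R M] [Finite ι] {i j : ι}
    (hij : i ≠ j) : finrank R M + finrank R (pairDiagonal R M i j) = finrank R (ι → M) := by
  classical
  let coord (a : ι) : (ι → M) →ₗ[R] M := LinearMap.proj a
  let difference := coord i - coord j
  have hsurj : Surjective difference := fun v =>
    ⟨Pi.single i v, by simp [difference, coord, hij.symm]⟩
  rw [pairDiagonal, LinearMap.eqLocus_eq_ker_sub, ← difference.finrank_range_add_finrank_ker,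
    LinearMap.range_eq_top.2 hsurj, finrank_top]

end Diagonal

theorem isExtensorBelow_setOf_injective (ι V : Type*) [Finite ι] [NormedAddCommGroup V]
    [NormedSpace ℝ V] [FiniteDimensional ℝ V] :
    IsExtensorBelow (finrank ℝ V) {f : ι → V | Injective f} := by
  have := Fintype.ofFinite ι
  refine isExtensorBelow_of_compl_subset_iUnion_range (ι := {p : ι × ι // p.1 ≠ p.2})
    (fun p => (pairDiagonal ℝ V p.1.1 p.1.2).subtypeL.contDiff)
    (fun p => (finrank_add_finrank_pairDiagonal p.2).le) fun f hf => ?_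
  obtain ⟨i, j, hfij, hij⟩ := not_injective_iff.1 hf
  exact mem_iUnion.2 ⟨⟨(i, j), hij⟩, ⟨f, hfij⟩, rfl⟩

theorem statement14_general (ι V : Type*) [Finite ι] [NormedAddCommGroup V] [NormedSpace ℝ V]
    [FiniteDimensional ℝ V] (hV : 1 ≤ finrank ℝ V) :
    {f : ι → V | Injective f}.Nonempty ∧
    (2 ≤ finrank ℝ V → PathConnectedSpace {f : ι → V | Injective f}) ∧
    (∀ f : {f : ι → V | Injective f}, ∀ m : ℕ, m + 2 ≤ finrank ℝ V →
      Subsingleton (HomotopyGroup (Fin m) {f : ι → V | Injective f} f)) := by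
  have hX := isExtensorBelow_setOf_injective ι V
  refine ⟨nonempty_coe_sort.1 (hX.nonempty hV), hX.pathConnectedSpace, fun f m hm => ?_⟩
  exact hX.subsingleton_homotopyGroup (by rw [Fintype.card_fin]; omega) f

/-- The ordered configuration space of `ℓ` points in `ℝ^k` is `(k-2)`-connected:
it is nonempty, path connected when `k ≥ 2`, and its homotopy groups `π_m` vanish
for `1 ≤ m ≤ k - 2`. -/
theorem statement14 (k ℓ : ℕ) (hk : 1 ≤ k) :
    (ConfigSpace k ℓ).Nonempty ∧
    (2 ≤ k → PathConnectedSpace (ConfigSpace k ℓ)) ∧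
    (∀ f : ConfigSpace k ℓ, ∀ m : ℕ, 1 ≤ m → m ≤ k - 2 →
      Subsingleton (HomotopyGroup (Fin m) (ConfigSpace k ℓ) f)) := by
  have h := statement14_general (Fin ℓ) (Fin k → ℝ)
  rw [finrank_fin_fun] at h
  exact ⟨(h hk).1, (h hk).2.1, fun f m _ hm => (h hk).2.2 f m (by omega)⟩
end
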